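/- Let L > 0, let a : ℝ → ℝ be an L-periodic continuous function with magnetic flux α = (1/(2π))∫₀^L a(x)dx, α ∉ ℤ, and define K₂(α) = (5/(3√3 π)) · [sup_{b ≥ 0} b^{5/3} Σ_{k∈ℤ} (|k+α|³ + b)^{−2}]². Then for every finite family ψ₁,…,ψ_N of L-periodic H¹ functions that is orthonormal in L²(0,L), setting ρ(x) = Σ_{n=1}^N |ψ_n(x)|², one has ∫₀^L ρ(x)³ dx ≤ K₂(α) · Σ_{n=1}^N ∫₀^L |i ψ_n'(x) − a(x)ψ_n(x)|² dx. -/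

import Mathlib

open MeasureTheory Real Filter

/-- The constant `k(α)` from (K1): `1/|sin(2πα)|` when `α mod 1 ∈ (0,1/4)∪(3/4,1)`,
and `1` when `α mod 1 ∈ [1/4,3/4]`. -/
noncomputable def kConst (α : ℝ) : ℝ :=
  if 1/4 ≤ Int.fract α ∧ Int.fract α ≤ 3/4 then 1
  else 1 / |Real.sin (2 * Real.pi * α)|

/-- `F(b,α) = b^{5/3} Σ_{k∈ℤ} (|k+α|³+b)^{-2}`. -/
noncomputable def Fsum (α b : ℝ) : ℝ :=
  b ^ ((5:ℝ)/3) * ∑' k : ℤ, ((|(k : ℝ) + α| ^ 3 + b) ^ 2)⁻¹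

/-- `sup_{b ≥ 0} F(b,α)`. -/
noncomputable def supF (α : ℝ) : ℝ := ⨆ b : {x : ℝ // 0 ≤ x}, Fsum α b.1

/-- The constant `K₂(α)`. -/
noncomputable def K2 (α : ℝ) : ℝ :=
  5 / (3 * Real.sqrt 3 * Real.pi) * (supF α) ^ 2

/-- `K(α) = min(K₁(α), K₂(α))` with `K₁(α) = k(α)²`. -/
noncomputable def Kmin (α : ℝ) : ℝ := min ((kConst α) ^ 2) (K2 α)

/-!
A gauge transformation replaces `a` by its mean, so that the kinetic energy of `ψ` becomes a
multiple of `∑ k, (k + α)² |û k|²`, where `û` are the Fourier coefficients of the transformed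
function `u`. Up to a constant, `p²` is the integral of `t χ(p, t)²` over all thresholds `t > 0`,
where `χ(p, t) = |p|³ / (|p|³ + t³)` is a high-pass cutoff. Bessel's inequality bounds the
complementary low-frequency parts of the orthonormal system pointwise:
their squares add up to at most `∑ k, χ(t, k + α)² = t F(t³, α) ≤ t sup F`. By the triangle
inequality the high-frequency parts at `x` therefore have `ℓ²` norm at least `√ρ(x) - √(t sup F)`.
Squaring and integrating against `t dt` over `t < ρ(x) / sup F` bounds the energy density below by a
multiple of `ρ(x)³ / (sup F)²`.
-/

namespace LiebThirring

open Set Topology AddCircle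

section CubicCutoff

/-- The cubic cutoff `|x|³ / (|x|³ + |y|³)`. As a function of the momentum `x` it is a
high-pass filter at the threshold `y`, as a function of `y` a low-pass filter at the
threshold `x`. -/
noncomputable def cubicCutoff (x y : ℝ) : ℝ := |x| ^ 3 / (|x| ^ 3 + |y| ^ 3)

lemma cubicCutoff_nonneg (x y : ℝ) : 0 ≤ cubicCutoff x y := by
  unfold cubicCutoff; positivity

lemma cubicCutoff_le_one (x y : ℝ) : cubicCutoff x y ≤ 1 :=
  div_le_one_of_le₀ (le_add_of_nonneg_right (by positivity)) (by positivity)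

lemma cubicCutoff_add_cubicCutoff_swap {x : ℝ} (hx : x ≠ 0) (y : ℝ) :
    cubicCutoff x y + cubicCutoff y x = 1 := by
  have : |x| ^ 3 + |y| ^ 3 ≠ 0 := by positivity
  rw [cubicCutoff, cubicCutoff, add_comm (|y| ^ 3), ← add_div, div_self this]

lemma continuous_cubicCutoff_right {x : ℝ} (hx : x ≠ 0) : Continuous (cubicCutoff x) :=
  continuous_const.div (by fun_prop) fun y ↦ by positivity

lemma cubicCutoff_sq_le_sq_mul_inv (x : ℝ) {y : ℝ} (hy : y ≠ 0) :
    cubicCutoff x y ^ 2 ≤ x ^ 2 * (y ^ 2)⁻¹ := by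
  have hmul : |y| * cubicCutoff x y ≤ |x| := by
    rw [cubicCutoff, ← mul_div_assoc, div_le_iff₀ (by positivity)]
    have hx := abs_nonneg x
    have hy := abs_nonneg y
    rcases le_total |y| |x| with h | h
    · nlinarith [mul_le_mul_of_nonneg_right h (pow_nonneg hx 3), pow_nonneg hy 3]
    · nlinarith [mul_le_mul_of_nonneg_left (pow_le_pow_left₀ hx h 2) (mul_nonneg hx hy),
        pow_nonneg hx 4]
  rw [← div_eq_mul_inv, le_div_iff₀ (by positivity), ← sq_abs x, ← sq_abs y, ← mul_pow,
    mul_comm]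
  exact pow_le_pow_left₀ (mul_nonneg (abs_nonneg y) (cubicCutoff_nonneg x y)) hmul 2

lemma cubicCutoff_sq_le_two_mul_inv {x : ℝ} (hx : 0 < x) (y : ℝ) :
    cubicCutoff x y ^ 2 ≤ 2 * (1 + (y / x) ^ 2)⁻¹ := by
  have hrhs : 2 * (1 + (y / x) ^ 2)⁻¹ = 2 * x ^ 2 / (x ^ 2 + |y| ^ 2) := by
    rw [sq_abs]; field_simp
  rw [hrhs, cubicCutoff, abs_of_pos hx, div_pow, div_le_div_iff₀ (by positivity) (by positivity)]
  have hpoly : x ^ 4 * (x ^ 2 + |y| ^ 2) ≤ 2 * (x ^ 3 + |y| ^ 3) ^ 2 := by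
    have hcross : 0 ≤ x ^ 3 * |y| ^ 3 := by positivity
    rcases le_total |y| x with h | h
    · have : x ^ 4 * |y| ^ 2 ≤ x ^ 4 * x ^ 2 := by gcongr
      nlinarith [sq_nonneg (|y| ^ 3)]
    · have : x ^ 4 * |y| ^ 2 ≤ |y| ^ 4 * |y| ^ 2 := by gcongr
      nlinarith [sq_nonneg (x ^ 3)]
  nlinarith [mul_le_mul_of_nonneg_left hpoly (sq_nonneg x)]

lemma summable_cubicCutoff_sq {ι : Type*} {w : ι → ℝ} (hw : ∀ k, w k ≠ 0)
    (hw₂ : Summable fun k ↦ (w k ^ 2)⁻¹) (t : ℝ) :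
    Summable fun k ↦ cubicCutoff t (w k) ^ 2 :=
  (hw₂.mul_left (t ^ 2)).of_nonneg_of_le (fun _ ↦ sq_nonneg _)
    fun k ↦ cubicCutoff_sq_le_sq_mul_inv t (hw k)

/-- An antiderivative of `t / (1 + t³)²` on `[0, ∞)`, found by partial fractions; it evaluates the
integral of the squared cutoff over all thresholds. -/
noncomputable def cutoffPrimitive (t : ℝ) : ℝ :=
  1 / 3 * (t ^ 2 / (1 + t ^ 3)) + 1 / 18 * log ((1 + t ^ 3) / (1 + t) ^ 3)
    + 1 / (3 * √3) * arctan ((2 * t - 1) / √3)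

lemma hasDerivAt_cutoffPrimitive {t : ℝ} (ht : 0 ≤ t) :
    HasDerivAt cutoffPrimitive (t / (1 + t ^ 3) ^ 2) t := by
  have hquad : 0 < 1 - t + t ^ 2 := by nlinarith [sq_nonneg (t - 1 / 2)]
  have hcube : HasDerivAt (fun t : ℝ ↦ 1 + t ^ 3) (3 * t ^ 2) t := by
    simpa using (hasDerivAt_pow 3 t).const_add 1
  have hfrac : HasDerivAt (fun t : ℝ ↦ t ^ 2 / (1 + t ^ 3))
      ((2 * t * (1 + t ^ 3) - t ^ 2 * (3 * t ^ 2)) / (1 + t ^ 3) ^ 2) t := by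
    simpa using (hasDerivAt_pow 2 t).fun_div hcube (by positivity)
  have hlog : HasDerivAt (fun t : ℝ ↦ log ((1 + t ^ 3) / (1 + t) ^ 3))
      (3 * t ^ 2 / (1 + t ^ 3) - 3 / (1 + t)) t := by
    have hlin := ((hasDerivAt_id' t).const_add 1).fun_pow 3
    have := (hcube.fun_div hlin (by positivity)).log (by positivity)
    convert! this using 1
    push_cast
    field_simp
  have harctan : HasDerivAt (fun t : ℝ ↦ arctan ((2 * t - 1) / √3))
      (√3 / (2 * (1 - t + t ^ 2))) t := by
    have := ((((hasDerivAt_id' t).const_mul 2).sub_const 1).div_const √3).arctan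
    convert! this using 1
    rw [div_pow, Real.sq_sqrt (by norm_num),
      show 1 + (2 * t - 1) ^ 2 / 3 = 4 / 3 * (1 - t + t ^ 2) by ring]
    field_simp
    rw [Real.sq_sqrt (by norm_num)]
    norm_num
  convert! ((hfrac.const_mul (1 / 3)).add (hlog.const_mul (1 / 18))).add
    (harctan.const_mul (1 / (3 * √3))) using 1
  rw [show 1 / (3 * √3) * (√3 / (2 * (1 - t + t ^ 2))) = 1 / (6 * (1 - t + t ^ 2)) by
      field_simp; norm_num,
    show 1 + t ^ 3 = (1 + t) * (1 - t + t ^ 2) by ring]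
  field_simp
  ring

lemma cutoffPrimitive_zero : cutoffPrimitive 0 = -(π / (18 * √3)) := by
  have : arctan ((2 * 0 - 1) / √3) = -(π / 6) := by
    rw [show (2 * 0 - 1) / √3 = -(1 / √3) by ring, arctan_neg, ← tan_pi_div_six,
      arctan_tan] <;> linarith [pi_pos]
  rw [cutoffPrimitive, this]
  norm_num
  ring

lemma tendsto_cutoffPrimitive : Tendsto cutoffPrimitive atTop (𝓝 (π / (6 * √3))) := by
  have hinv : Tendsto (fun t : ℝ ↦ t⁻¹) atTop (𝓝 0) := tendsto_inv_atTop_zero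
  have hfrac : Tendsto (fun t : ℝ ↦ t ^ 2 / (1 + t ^ 3)) atTop (𝓝 0) := by
    have : Tendsto (fun t : ℝ ↦ t⁻¹ / (t⁻¹ ^ 3 + 1)) atTop (𝓝 (0 / (0 ^ 3 + 1))) :=
      hinv.div ((hinv.pow 3).add_const 1) (by norm_num)
    rw [zero_div] at this
    refine this.congr' ?_
    filter_upwards [eventually_gt_atTop 0] with t ht
    field_simp
  have hlog : Tendsto (fun t : ℝ ↦ log ((1 + t ^ 3) / (1 + t) ^ 3)) atTop (𝓝 0) := by
    have : Tendsto (fun t : ℝ ↦ (t⁻¹ ^ 3 + 1) / (t⁻¹ + 1) ^ 3) atTop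
        (𝓝 ((0 ^ 3 + 1) / (0 + 1) ^ 3)) :=
      ((hinv.pow 3).add_const 1).div ((hinv.add_const 1).pow 3) (by norm_num)
    rw [show ((0 ^ 3 + 1) / (0 + 1) ^ 3 : ℝ) = 1 by norm_num] at this
    rw [← log_one]
    refine (this.log one_ne_zero).congr' ?_
    filter_upwards [eventually_gt_atTop 0] with t ht
    congr 1
    field_simp
  have harctan : Tendsto (fun t : ℝ ↦ arctan ((2 * t - 1) / √3)) atTop (𝓝 (π / 2)) := by
    have : Tendsto (fun t : ℝ ↦ (2 * t - 1) / √3) atTop atTop :=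
      (tendsto_atTop_add_const_right _ _ (tendsto_id.const_mul_atTop (by norm_num))).atTop_div_const
        (by positivity)
    exact (tendsto_arctan_atTop.mono_right nhdsWithin_le_nhds).comp this
  convert! ((hfrac.const_mul (1 / 3)).add (hlog.const_mul (1 / 18))).add
    (harctan.const_mul (1 / (3 * √3))) using 2
  ring

lemma lintegral_mul_cubicCutoff_sq {x : ℝ} (hx : x ≠ 0) :
    ∫⁻ t in Ioi 0, ENNReal.ofReal (t * cubicCutoff x t ^ 2) =
      ENNReal.ofReal (2 * π / (9 * √3) * x ^ 2) := by
  have hderiv : ∀ t ∈ Ici (0 : ℝ), HasDerivAt (fun t ↦ x ^ 2 * cutoffPrimitive (t / |x|))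
      (t * cubicCutoff x t ^ 2) t := fun t (ht : 0 ≤ t) ↦ by
    have := ((hasDerivAt_cutoffPrimitive (div_nonneg ht (abs_nonneg x))).comp t
      ((hasDerivAt_id' t).div_const |x|)).const_mul (x ^ 2)
    convert! this using 1
    rw [cubicCutoff, abs_of_nonneg ht, ← sq_abs x]
    field_simp
  have hnonneg : ∀ t ∈ Ioi (0 : ℝ), 0 ≤ t * cubicCutoff x t ^ 2 := fun t (ht : 0 < t) ↦ by
    positivity
  have hlim : Tendsto (fun t ↦ x ^ 2 * cutoffPrimitive (t / |x|)) atTop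
      (𝓝 (x ^ 2 * (π / (6 * √3)))) :=
    (tendsto_cutoffPrimitive.comp (tendsto_id.atTop_div_const (abs_pos.2 hx))).const_mul _
  rw [← ofReal_integral_eq_lintegral_ofReal (integrableOn_Ioi_deriv_of_nonneg' hderiv hnonneg hlim)
      (ae_restrict_of_forall_mem measurableSet_Ioi hnonneg),
    integral_Ioi_of_hasDerivAt_of_nonneg' hderiv hnonneg hlim, zero_div, cutoffPrimitive_zero]
  congr 1
  field_simp
  norm_num

end CubicCutoff

section LatticeSum

variable {α : ℝ}

lemma int_add_ne_zero (hα : ∀ m : ℤ, α ≠ m) (k : ℤ) : (k : ℝ) + α ≠ 0 := fun h ↦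
  hα (-k) (by push_cast; linarith)

lemma summable_inv_int_add_sq (α : ℝ) : Summable fun k : ℤ ↦ (((k : ℝ) + α) ^ 2)⁻¹ := by
  simpa using (summable_one_div_int_add_rpow α 2).2 (by norm_num)

lemma Fsum_pow_three (α : ℝ) {t : ℝ} (ht : 0 < t) :
    Fsum α (t ^ 3) = t⁻¹ * ∑' k : ℤ, cubicCutoff t (k + α) ^ 2 := by
  have hpow : (t ^ 3) ^ ((5 : ℝ) / 3) = t ^ 5 := by
    rw [← rpow_natCast, ← rpow_natCast, ← rpow_mul ht.le]; norm_num
  rw [Fsum, hpow, ← tsum_mul_left, ← tsum_mul_left]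
  refine tsum_congr fun k ↦ ?_
  rw [cubicCutoff, abs_of_pos ht, add_comm (t ^ 3)]
  field_simp

lemma inv_one_add_div_sq_le {t x y : ℝ} (ht : 1 ≤ t) (hx : x ∈ Icc y (y + 1)) :
    (1 + (y / t) ^ 2)⁻¹ ≤ 3 * (1 + (x / t) ^ 2)⁻¹ := by
  have : 0 < t := by linarith
  have hle : t ^ 2 + x ^ 2 ≤ 3 * (t ^ 2 + y ^ 2) := by
    nlinarith [hx.1, hx.2, sq_nonneg (x - 2 * y)]
  rw [← div_eq_mul_inv, le_div_iff₀ (by positivity), mul_comm, ← div_eq_mul_inv,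
    div_le_iff₀ (by positivity)]
  calc 1 + (x / t) ^ 2 = (t ^ 2 + x ^ 2) / t ^ 2 := by field_simp
    _ ≤ 3 * (t ^ 2 + y ^ 2) / t ^ 2 := by gcongr
    _ = 3 * (1 + (y / t) ^ 2) := by field_simp

/- Each summand is at most six times the integral of the Cauchy density `(1 + (x / t)²)⁻¹` over a
unit interval, and these intervals tile the line. -/
lemma tsum_cubicCutoff_sq_le_of_one_le (α : ℝ) {t : ℝ} (ht : 1 ≤ t) :
    ∑' k : ℤ, cubicCutoff t (k + α) ^ 2 ≤ 6 * π * t := by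
  have ht₀ : 0 < t := by linarith
  have hint : Integrable fun x : ℝ ↦ 6 * (1 + (x / t) ^ 2)⁻¹ :=
    (integrable_inv_one_add_sq.comp_div ht₀.ne').const_mul 6
  have htotal : ∫ x : ℝ, 6 * (1 + (x / t) ^ 2)⁻¹ = 6 * π * t := by
    rw [integral_const_mul, Measure.integral_comp_div (fun x : ℝ ↦ (1 + x ^ 2)⁻¹),
      integral_univ_inv_one_add_sq, abs_of_pos ht₀, smul_eq_mul]
    ring
  have htile := htotal ▸ hint.hasSum_intervalIntegral α
  have hterm (k : ℤ) : cubicCutoff t (k + α) ^ 2 ≤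
      ∫ x in α + k..α + k + 1, 6 * (1 + (x / t) ^ 2)⁻¹ := by
    rw [add_comm (k : ℝ)]
    refine (cubicCutoff_sq_le_two_mul_inv ht₀ _).trans ?_
    calc 2 * (1 + ((α + k) / t) ^ 2)⁻¹
        = ∫ x in α + k..α + k + 1, 2 * (1 + ((α + k) / t) ^ 2)⁻¹ := by simp
      _ ≤ ∫ x in α + k..α + k + 1, 6 * (1 + (x / t) ^ 2)⁻¹ :=
        intervalIntegral.integral_mono_on (by linarith) (by simp) hint.intervalIntegrable
          fun x hx ↦ by linarith [inv_one_add_div_sq_le ht hx]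
  exact hasSum_le hterm
    (htile.summable.of_nonneg_of_le (fun _ ↦ sq_nonneg _) hterm).hasSum htile

lemma bddAbove_range_Fsum (hα : ∀ m : ℤ, α ≠ m) :
    BddAbove (range fun b : {x : ℝ // 0 ≤ x} ↦ Fsum α b.1) := by
  refine ⟨max (∑' k : ℤ, (((k : ℝ) + α) ^ 2)⁻¹) (6 * π), ?_⟩
  rintro _ ⟨⟨b, hb⟩, rfl⟩
  obtain rfl | hb := hb.eq_or_lt
  · have : 0 ≤ 6 * π := by positivity
    simp [Fsum, zero_rpow, this]
  obtain ⟨t, ht, rfl⟩ : ∃ t > 0, t ^ 3 = b :=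
    ⟨b ^ ((1 : ℝ) / 3), by positivity, by rw [← rpow_mul_natCast hb.le]; norm_num⟩
  change Fsum α (t ^ 3) ≤ _
  rw [Fsum_pow_three α ht, inv_mul_le_iff₀ ht]
  rcases le_total t 1 with ht₁ | ht₁
  · have hsum := summable_inv_int_add_sq α
    calc ∑' k : ℤ, cubicCutoff t (k + α) ^ 2
        ≤ ∑' k : ℤ, t ^ 2 * (((k : ℝ) + α) ^ 2)⁻¹ :=
          (summable_cubicCutoff_sq (int_add_ne_zero hα) hsum t).tsum_le_tsum
            (fun k ↦ cubicCutoff_sq_le_sq_mul_inv t (int_add_ne_zero hα k)) (hsum.mul_left _)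
      _ = t ^ 2 * ∑' k : ℤ, (((k : ℝ) + α) ^ 2)⁻¹ := tsum_mul_left
      _ ≤ t * max (∑' k : ℤ, (((k : ℝ) + α) ^ 2)⁻¹) (6 * π) := by
        gcongr
        · nlinarith
        · exact le_max_left _ _
  · calc ∑' k : ℤ, cubicCutoff t (k + α) ^ 2 ≤ t * (6 * π) := by
          linarith [tsum_cubicCutoff_sq_le_of_one_le α ht₁]
      _ ≤ t * max (∑' k : ℤ, (((k : ℝ) + α) ^ 2)⁻¹) (6 * π) := by gcongr; exact le_max_right _ _

lemma tsum_cubicCutoff_sq_le (hα : ∀ m : ℤ, α ≠ m) {t : ℝ} (ht : 0 < t) :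
    ∑' k : ℤ, cubicCutoff t (k + α) ^ 2 ≤ supF α * t := by
  rw [mul_comm, ← inv_mul_le_iff₀ ht, ← Fsum_pow_three α ht]
  exact le_ciSup (bddAbove_range_Fsum hα) ⟨t ^ 3, by positivity⟩

end LatticeSum

section FourierMultiplier

/- Bessel's inequality for the vector with coordinates `conj (c k)`. -/
lemma sum_norm_sq_tsum_mul_repr_le {ι κ 𝕜 E : Type*} [Fintype ι] [RCLike 𝕜]
    [NormedAddCommGroup E] [InnerProductSpace 𝕜 E] (b : HilbertBasis κ 𝕜 E) {v : ι → E}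
    (hv : Orthonormal 𝕜 v) {c : κ → 𝕜} (hc : Summable fun k ↦ ‖c k‖ ^ 2) :
    ∑ n, ‖∑' k, c k * b.repr (v n) k‖ ^ 2 ≤ ∑' k, ‖c k‖ ^ 2 := by
  let z : lp (fun _ : κ ↦ 𝕜) 2 :=
    ⟨fun k ↦ starRingEnd 𝕜 (c k), memℓp_gen (by simpa using hc)⟩
  have hz : ‖z‖ ^ 2 = ∑' k, ‖c k‖ ^ 2 := by
    simpa [z] using lp.norm_rpow_eq_tsum (p := 2) (by simp) z
  have hinner (n : ι) : inner 𝕜 z (b.repr (v n)) = ∑' k, c k * b.repr (v n) k := by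
    simp [z, lp.inner_eq_tsum, RCLike.inner_apply, mul_comm]
  have hbessel := (hv.comp_linearIsometryEquiv b.repr).sum_inner_products_le
    (s := Finset.univ) (x := z)
  simpa only [Function.comp_apply, norm_inner_symm _ z, hinner, hz] using hbessel

variable {T : ℝ} [hT : Fact (0 < T)]

lemma integral_haarAddCircle_eq_smul {E : Type*} [NormedAddCommGroup E] [NormedSpace ℝ E]
    (f : AddCircle T → E) : ∫ x, f x ∂haarAddCircle = T⁻¹ • ∫ x in 0..T, f x := by
  rw [integral_haarAddCircle, ← AddCircle.intervalIntegral_preimage T 0, zero_add]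

lemma orthonormal_toLp_sqrt_smul {ι : Type*} [DecidableEq ι] {u : ι → C(AddCircle T, ℂ)}
    (hu : ∀ i j, ∫ x in 0..T, u i x * starRingEnd ℂ (u j x) = if i = j then 1 else 0) :
    Orthonormal ℂ fun n ↦ ((√T : ℂ) • u n).toLp 2 haarAddCircle ℂ := by
  rw [orthonormal_iff_ite]
  intro i j
  have hT₀ : (T : ℂ) ≠ 0 := by exact_mod_cast hT.out.ne'
  have hmul (x : ℝ) : (√T : ℂ) * u j x * starRingEnd ℂ (√T * u i x) =
      T * (u j x * starRingEnd ℂ (u i x)) := by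
    have : (√T : ℂ) * √T = T := by exact_mod_cast mul_self_sqrt hT.out.le
    rw [map_mul, Complex.conj_ofReal, mul_mul_mul_comm, this]
  rw [ContinuousMap.inner_toLp, integral_haarAddCircle_eq_smul]
  simp_rw [ContinuousMap.smul_apply, smul_eq_mul, hmul]
  rw [intervalIntegral.integral_const_mul, hu, Complex.real_smul, Complex.ofReal_inv,
    inv_mul_cancel_left₀ hT₀]
  exact if_congr eq_comm rfl rfl

lemma hasSum_norm_sq_fourierCoeff (f : C(AddCircle T, ℂ)) :
    HasSum (fun k ↦ ‖fourierCoeff f k‖ ^ 2) (∫ x, ‖f x‖ ^ 2 ∂haarAddCircle) := by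
  have hparseval := hasSum_sq_fourierCoeff (f.toLp 2 haarAddCircle ℂ)
  simp_rw [fourierCoeff_toLp] at hparseval
  convert! hparseval using 1
  refine integral_congr_ae ?_
  filter_upwards [f.coeFn_toLp haarAddCircle (p := 2) (𝕜 := ℂ)] with x hx
  rw [hx]

lemma fourierCoeff_eq_of_hasSum {f : C(AddCircle T, ℂ)} {d : ℤ → ℂ}
    (h : HasSum (fun k ↦ d k • fourier k) f) (k : ℤ) : fourierCoeff f k = d k := by
  let φ : C(AddCircle T, ℂ) →L[ℂ] ℂ :=
    (innerSL ℂ (fourierBasis k)).comp (ContinuousMap.toLp 2 haarAddCircle ℂ)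
  have hφ (g : C(AddCircle T, ℂ)) : φ g = fourierCoeff g k := by
    simp only [φ, ContinuousLinearMap.comp_apply, innerSL_apply_apply,
      ← HilbertBasis.repr_apply_apply, fourierBasis_repr, fourierCoeff_toLp]
  have hsum : HasSum (fun j ↦ d j • φ (fourier j)) (φ f) := by
    simpa only [map_smul] using φ.hasSum h
  simp only [hφ, fourierCoeff_fourier] at hsum
  refine hsum.unique ?_
  convert! hasSum_single k fun j hj ↦ ?_
  · simp
  · simp [Pi.single_eq_of_ne' hj]

/-- The Fourier multiplier with symbol `m`, applied to `f`. The series is taken in the sup norm, so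
this is the junk value `0` unless the series converges there, for instance because
`m k * fourierCoeff f k` is summable. -/
noncomputable def fourierMultiplier (m : ℤ → ℂ) (f : C(AddCircle T, ℂ)) : C(AddCircle T, ℂ) :=
  ∑' k, (m k * fourierCoeff f k) • fourier k

variable {m m₁ m₂ : ℤ → ℂ} {f : C(AddCircle T, ℂ)}

lemma norm_mul_fourierCoeff_le (hm : ∀ k, ‖m k‖ ≤ 1) (k : ℤ) :
    ‖m k * fourierCoeff f k‖ ≤ ‖fourierCoeff f k‖ := by
  rw [norm_mul]
  exact mul_le_of_le_one_left (norm_nonneg _) (hm k)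

lemma summable_mul_fourierCoeff (hm : ∀ k, ‖m k‖ ≤ 1) (hf : Summable (fourierCoeff f)) :
    Summable fun k ↦ m k * fourierCoeff f k :=
  hf.norm.of_norm_bounded (norm_mul_fourierCoeff_le hm)

lemma hasSum_fourierMultiplier (h : Summable fun k ↦ m k * fourierCoeff f k) :
    HasSum (fun k ↦ (m k * fourierCoeff f k) • fourier k) (fourierMultiplier m f) :=
  (Summable.of_norm (by simpa only [norm_smul, fourier_norm, mul_one] using h.norm)).hasSum

lemma fourierMultiplier_apply (h : Summable fun k ↦ m k * fourierCoeff f k) (x : AddCircle T) :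
    fourierMultiplier m f x = ∑' k, m k * fourierCoeff f k * fourier k x := by
  simpa using ((ContinuousMap.evalCLM ℂ x).hasSum (hasSum_fourierMultiplier h)).tsum_eq.symm

lemma fourierMultiplier_add_eq_self (hm : ∀ k, m₁ k + m₂ k = 1)
    (h₁ : Summable fun k ↦ m₁ k * fourierCoeff f k)
    (h₂ : Summable fun k ↦ m₂ k * fourierCoeff f k) :
    fourierMultiplier m₁ f + fourierMultiplier m₂ f = f := by
  have hcoeff (k : ℤ) : m₁ k * fourierCoeff f k + m₂ k * fourierCoeff f k = fourierCoeff f k := by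
    rw [← add_mul, hm, one_mul]
  have hf : Summable (fourierCoeff f) := by simpa only [hcoeff] using h₁.add h₂
  refine ((hasSum_fourierMultiplier h₁).add (hasSum_fourierMultiplier h₂)).unique ?_
  simpa only [← add_smul, hcoeff] using hasSum_fourier_series_of_summable hf

lemma continuous_fourierMultiplier {X : Type*} [TopologicalSpace X] {m : X → ℤ → ℂ}
    (hm : ∀ k, Continuous fun t ↦ m t k) (hm₁ : ∀ t k, ‖m t k‖ ≤ 1)
    (hf : Summable (fourierCoeff f)) : Continuous fun t ↦ fourierMultiplier (m t) f := by
  refine continuous_tsum (fun k ↦ by have := hm k; fun_prop) hf.norm fun k t ↦ ?_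
  rw [norm_smul, fourier_norm, mul_one]
  exact norm_mul_fourierCoeff_le (hm₁ t) k

lemma lintegral_enorm_sq_fourierMultiplier (h : Summable fun k ↦ m k * fourierCoeff f k) :
    ∫⁻ x, ‖fourierMultiplier m f x‖ₑ ^ 2 ∂haarAddCircle =
      ∑' k, ‖m k‖ₑ ^ 2 * ‖fourierCoeff f k‖ₑ ^ 2 := by
  have hparseval := hasSum_norm_sq_fourierCoeff (fourierMultiplier m f)
  have hint : Integrable (fun x ↦ ‖fourierMultiplier m f x‖ ^ 2) haarAddCircle :=
    Continuous.integrable_of_hasCompactSupport (by fun_prop) (.of_compactSpace _)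
  calc ∫⁻ x, ‖fourierMultiplier m f x‖ₑ ^ 2 ∂haarAddCircle
      = ENNReal.ofReal (∫ x, ‖fourierMultiplier m f x‖ ^ 2 ∂haarAddCircle) := by
        rw [ofReal_integral_eq_lintegral_ofReal hint (ae_of_all _ fun _ ↦ by positivity)]
        simp_rw [ENNReal.ofReal_pow (norm_nonneg _), ofReal_norm]
    _ = ∑' k, ENNReal.ofReal (‖fourierCoeff (fourierMultiplier m f) k‖ ^ 2) := by
        rw [← hparseval.tsum_eq,
          ENNReal.ofReal_tsum_of_nonneg (fun _ ↦ by positivity) hparseval.summable]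
    _ = ∑' k, ‖m k‖ₑ ^ 2 * ‖fourierCoeff f k‖ₑ ^ 2 := by
        refine tsum_congr fun k ↦ ?_
        rw [fourierCoeff_eq_of_hasSum (hasSum_fourierMultiplier h),
          ENNReal.ofReal_pow (norm_nonneg _), ofReal_norm, enorm_mul, mul_pow]

lemma sum_norm_sq_fourierMultiplier_le {ι : Type*} [Fintype ι] {u : ι → C(AddCircle T, ℂ)}
    (hu : Orthonormal ℂ fun n ↦ (u n).toLp 2 haarAddCircle ℂ) (hm : Summable fun k ↦ ‖m k‖ ^ 2)
    (h : ∀ n, Summable fun k ↦ m k * fourierCoeff (u n) k) (x : AddCircle T) :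
    ∑ n, ‖fourierMultiplier m (u n) x‖ ^ 2 ≤ ∑' k, ‖m k‖ ^ 2 := by
  have hnorm (k : ℤ) : ‖m k * fourier k x‖ = ‖m k‖ := by
    rw [norm_mul, fourier_apply, Circle.norm_coe, mul_one]
  have hbessel := sum_norm_sq_tsum_mul_repr_le fourierBasis hu
    (c := fun k ↦ m k * fourier k x) (by simpa only [hnorm] using hm)
  simpa only [hnorm, fourierBasis_repr, fourierCoeff_toLp, fourierMultiplier_apply (h _),
    mul_right_comm (m _)] using hbessel

end FourierMultiplier

section CutoffEnergy

lemma norm_cubicCutoff (x y : ℝ) : ‖(cubicCutoff x y : ℂ)‖ = cubicCutoff x y := by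
  rw [Complex.norm_real, norm_of_nonneg (cubicCutoff_nonneg x y)]

lemma norm_cubicCutoff_le_one (x y : ℝ) : ‖(cubicCutoff x y : ℂ)‖ ≤ 1 :=
  (norm_cubicCutoff x y).trans_le (cubicCutoff_le_one x y)

lemma summable_of_summable_sq_mul_norm_sq {ι E : Type*} [NormedAddCommGroup E] [CompleteSpace E]
    {w : ι → ℝ} {c : ι → E} (hw : ∀ k, w k ≠ 0) (hw₂ : Summable fun k ↦ (w k ^ 2)⁻¹)
    (h : Summable fun k ↦ w k ^ 2 * ‖c k‖ ^ 2) : Summable c := by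
  refine .of_norm_bounded (hw₂.add h) fun k ↦ ?_
  have hsq : (w k ^ 2)⁻¹ + w k ^ 2 * ‖c k‖ ^ 2 - 2 * ‖c k‖ =
      (|w k|⁻¹ - |w k| * ‖c k‖) ^ 2 := by
    rw [← sq_abs (w k)]
    have := abs_pos.2 (hw k)
    field_simp
    ring
  linarith [sq_nonneg (|w k|⁻¹ - |w k| * ‖c k‖), norm_nonneg (c k)]

lemma pos_of_tsum_cubicCutoff_sq_le {ι : Type*} [Nonempty ι] {w : ι → ℝ} {A : ℝ}
    (hw : ∀ k, w k ≠ 0) (hw₂ : Summable fun k ↦ (w k ^ 2)⁻¹)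
    (hA : ∀ t > 0, ∑' k, cubicCutoff t (w k) ^ 2 ≤ A * t) : 0 < A := by
  obtain ⟨k⟩ := ‹Nonempty ι›
  have hk : 0 < cubicCutoff 1 (w k) ^ 2 := by unfold cubicCutoff; positivity
  have hsum := (summable_cubicCutoff_sq hw hw₂ 1).tsum_pos (fun _ ↦ sq_nonneg _) k hk
  linarith [hA 1 one_pos]

lemma sqrt_sum_norm_sq_add_le {ι E : Type*} [Fintype ι] [SeminormedAddCommGroup E] (p q : ι → E) :
    √(∑ n, ‖p n + q n‖ ^ 2) ≤ √(∑ n, ‖p n‖ ^ 2) + √(∑ n, ‖q n‖ ^ 2) := by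
  simpa [PiLp.norm_eq_of_L2] using norm_add_le (WithLp.toLp 2 p) (WithLp.toLp 2 q)

lemma integral_mul_sq_sub_sqrt_mul {R c : ℝ} (hR : 0 ≤ R) (hc : 0 < c) :
    ∫ t in 0..(R / c) ^ 2, t * (R - c * √t) ^ 2 = R ^ 6 / (30 * c ^ 4) := by
  have hcont : Continuous fun t ↦ R ^ 2 / 2 * t ^ 2 - 4 / 5 * R * c * (t ^ 2 * √t)
      + c ^ 2 / 3 * t ^ 3 := by fun_prop
  have hderiv : ∀ t ∈ Ioo 0 ((R / c) ^ 2), HasDerivAt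
      (fun t ↦ R ^ 2 / 2 * t ^ 2 - 4 / 5 * R * c * (t ^ 2 * √t) + c ^ 2 / 3 * t ^ 3)
      (t * (R - c * √t) ^ 2) t := fun t ht ↦ by
    have ht₀ : 0 < t := ht.1
    have hsqrt := (hasDerivAt_pow 2 t).fun_mul ((hasDerivAt_id' t).sqrt ht₀.ne')
    convert! (((hasDerivAt_pow 2 t).const_mul (R ^ 2 / 2)).fun_sub
      (hsqrt.const_mul (4 / 5 * R * c))).fun_add ((hasDerivAt_pow 3 t).const_mul (c ^ 2 / 3))
      using 1
    have hpos : 0 < √t := sqrt_pos.2 ht₀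
    have hsq : √t ^ 2 = t := sq_sqrt ht₀.le
    generalize √t = s at hpos hsq
    subst hsq
    field_simp
    norm_num
    ring
  rw [intervalIntegral.integral_eq_sub_of_hasDerivAt_of_le (by positivity) hcont.continuousOn
    hderiv (Continuous.intervalIntegrable (by fun_prop) _ _), sqrt_sq (by positivity)]
  field_simp
  norm_num
  ring

lemma ofReal_pow_three_div_le_lintegral {r A : ℝ} (hr : 0 ≤ r) (hA : 0 < A) {S : ℝ → ℝ}
    (hS : ∀ t > 0, √r - √(A * t) ≤ √(S t)) :
    ENNReal.ofReal (r ^ 3 / (30 * A ^ 2)) ≤ ∫⁻ t in Ioi 0, ENNReal.ofReal (t * S t) := by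
  have hroot : (√r / √A) ^ 2 = r / A := by rw [div_pow, sq_sqrt hr, sq_sqrt hA.le]
  have hint : Integrable (fun t ↦ t * (√r - √A * √t) ^ 2)
      (volume.restrict (Ioo 0 (r / A))) :=
    (Continuous.integrableOn_Icc (by fun_prop)).mono_set Ioo_subset_Icc_self
  have hle : ∀ t ∈ Ioo 0 (r / A), t * (√r - √A * √t) ^ 2 ≤ t * S t := fun t ht ↦ by
    have hlt : 0 < √r - √A * √t := by
      rw [sub_pos, ← sqrt_mul hA.le]
      exact sqrt_lt_sqrt (by have := ht.1; positivity) (by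
        rw [mul_comm]; exact (lt_div_iff₀ hA).1 ht.2)
    refine mul_le_mul_of_nonneg_left ((le_sqrt' hlt).1 ?_) ht.1.le
    simpa only [sqrt_mul hA.le] using hS t ht.1
  calc ENNReal.ofReal (r ^ 3 / (30 * A ^ 2))
      = ENNReal.ofReal (∫ t in Ioo 0 (r / A), t * (√r - √A * √t) ^ 2) := by
        rw [← integral_Ioc_eq_integral_Ioo, ← intervalIntegral.integral_of_le (by positivity),
          ← hroot, integral_mul_sq_sub_sqrt_mul (sqrt_nonneg r) (sqrt_pos.2 hA),
          show √r ^ 6 = (√r ^ 2) ^ 3 by ring, show √A ^ 4 = (√A ^ 2) ^ 2 by ring,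
          sq_sqrt hr, sq_sqrt hA.le]
    _ = ∫⁻ t in Ioo 0 (r / A), ENNReal.ofReal (t * (√r - √A * √t) ^ 2) :=
        ofReal_integral_eq_lintegral_ofReal hint (ae_restrict_of_forall_mem measurableSet_Ioo
          fun t ht ↦ mul_nonneg ht.1.le (sq_nonneg _))
    _ ≤ ∫⁻ t in Ioo 0 (r / A), ENNReal.ofReal (t * S t) :=
        setLIntegral_mono' measurableSet_Ioo fun t ht ↦ ENNReal.ofReal_le_ofReal (hle t ht)
    _ ≤ ∫⁻ t in Ioi 0, ENNReal.ofReal (t * S t) := lintegral_mono_set Ioo_subset_Ioi_self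

variable {T : ℝ} [hT : Fact (0 < T)] {w : ℤ → ℝ}

/-- The high-frequency part of `f`: the `k`-th mode, of momentum `w k`, is damped by the cubic
cutoff at the threshold `t`. -/
noncomputable def highPass (w : ℤ → ℝ) (t : ℝ) (f : C(AddCircle T, ℂ)) : C(AddCircle T, ℂ) :=
  fourierMultiplier (fun k ↦ (cubicCutoff (w k) t : ℂ)) f

lemma measurable_ofReal_mul_enorm_sq_highPass {f : C(AddCircle T, ℂ)} (hw : ∀ k, w k ≠ 0)
    (hf : Summable (fourierCoeff f)) :
    Measurable fun p : AddCircle T × ℝ ↦ ENNReal.ofReal p.2 * ‖highPass w p.2 f p.1‖ₑ ^ 2 := by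
  have hcont : Continuous fun t ↦ highPass w t f :=
    continuous_fourierMultiplier
      (fun k ↦ Complex.continuous_ofReal.comp (continuous_cubicCutoff_right (hw k)))
      (fun t k ↦ norm_cubicCutoff_le_one (w k) t) hf
  have heval : Continuous fun p : AddCircle T × ℝ ↦ highPass w p.2 f p.1 := by fun_prop
  exact (ENNReal.measurable_ofReal.comp measurable_snd).mul (heval.measurable.enorm.pow_const 2)

lemma lintegral_enorm_sq_highPass {f : C(AddCircle T, ℂ)} (hf : Summable (fourierCoeff f))
    (t : ℝ) :
    ∫⁻ x, ‖highPass w t f x‖ₑ ^ 2 ∂haarAddCircle =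
      ∑' k, ENNReal.ofReal (cubicCutoff (w k) t ^ 2) * ‖fourierCoeff f k‖ₑ ^ 2 := by
  rw [highPass, lintegral_enorm_sq_fourierMultiplier
    (summable_mul_fourierCoeff (fun k ↦ norm_cubicCutoff_le_one (w k) t) hf)]
  refine tsum_congr fun k ↦ ?_
  rw [← ofReal_norm, norm_cubicCutoff, ENNReal.ofReal_pow (cubicCutoff_nonneg _ _)]

lemma lintegral_lintegral_enorm_sq_highPass {f : C(AddCircle T, ℂ)} {E : ℝ} (hw : ∀ k, w k ≠ 0)
    (hf : Summable (fourierCoeff f)) (hE : HasSum (fun k ↦ w k ^ 2 * ‖fourierCoeff f k‖ ^ 2) E) :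
    ∫⁻ x, (∫⁻ t in Ioi 0, ENNReal.ofReal t * ‖highPass w t f x‖ₑ ^ 2) ∂haarAddCircle =
      ENNReal.ofReal (2 * π / (9 * √3) * E) := by
  have hmeas (k : ℤ) : Measurable fun t ↦ ENNReal.ofReal (t * cubicCutoff (w k) t ^ 2) := by
    have := (continuous_cubicCutoff_right (hw k)).measurable
    fun_prop
  calc ∫⁻ x, (∫⁻ t in Ioi 0, ENNReal.ofReal t * ‖highPass w t f x‖ₑ ^ 2) ∂haarAddCircle
      = ∫⁻ t in Ioi 0, ∫⁻ x, ENNReal.ofReal t * ‖highPass w t f x‖ₑ ^ 2 ∂haarAddCircle :=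
        lintegral_lintegral_swap (measurable_ofReal_mul_enorm_sq_highPass hw hf).aemeasurable
    _ = ∫⁻ t in Ioi 0, ∑' k,
          ENNReal.ofReal (t * cubicCutoff (w k) t ^ 2) * ‖fourierCoeff f k‖ₑ ^ 2 := by
        refine lintegral_congr fun t ↦ ?_
        simp_rw [lintegral_const_mul' _ _ ENNReal.ofReal_ne_top, lintegral_enorm_sq_highPass hf,
          ← ENNReal.tsum_mul_left, ENNReal.ofReal_mul' (sq_nonneg _), mul_assoc]
    _ = ∑' k, ENNReal.ofReal (2 * π / (9 * √3) * w k ^ 2) * ‖fourierCoeff f k‖ₑ ^ 2 := by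
        rw [lintegral_tsum fun k ↦ ((hmeas k).mul_const _).aemeasurable]
        refine tsum_congr fun k ↦ ?_
        rw [lintegral_mul_const _ (hmeas k), lintegral_mul_cubicCutoff_sq (hw k)]
    _ = ENNReal.ofReal (2 * π / (9 * √3) * E) := by
        rw [← (hE.mul_left _).tsum_eq,
          ENNReal.ofReal_tsum_of_nonneg (fun _ ↦ by positivity) (hE.mul_left _).summable]
        refine tsum_congr fun k ↦ ?_
        rw [← mul_assoc, ENNReal.ofReal_mul' (sq_nonneg ‖_‖), ENNReal.ofReal_pow (norm_nonneg _),
          ofReal_norm]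

variable {ι : Type*} [Fintype ι] {A : ℝ} {u : ι → C(AddCircle T, ℂ)} {E : ι → ℝ}

lemma sqrt_sum_norm_sq_sub_le_sqrt_sum_highPass
    (hu : Orthonormal ℂ fun n ↦ (u n).toLp 2 haarAddCircle ℂ) (hw : ∀ k, w k ≠ 0)
    (hw₂ : Summable fun k ↦ (w k ^ 2)⁻¹) (hf : ∀ n, Summable (fourierCoeff (u n))) {t : ℝ}
    (ht : ∑' k, cubicCutoff t (w k) ^ 2 ≤ A * t) (x : AddCircle T) :
    √(∑ n, ‖u n x‖ ^ 2) - √(A * t) ≤ √(∑ n, ‖highPass w t (u n) x‖ ^ 2) := by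
  let lowPass (n : ι) := fourierMultiplier (fun k ↦ (cubicCutoff t (w k) : ℂ)) (u n)
  have hlow (n : ι) : Summable fun k ↦ (cubicCutoff t (w k) : ℂ) * fourierCoeff (u n) k :=
    summable_mul_fourierCoeff (fun k ↦ norm_cubicCutoff_le_one t (w k)) (hf n)
  have hhigh (n : ι) : Summable fun k ↦ (cubicCutoff (w k) t : ℂ) * fourierCoeff (u n) k :=
    summable_mul_fourierCoeff (fun k ↦ norm_cubicCutoff_le_one (w k) t) (hf n)
  have hcutoff (k : ℤ) : (cubicCutoff t (w k) : ℂ) + cubicCutoff (w k) t = 1 := by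
    exact_mod_cast (add_comm _ _).trans (cubicCutoff_add_cubicCutoff_swap (hw k) t)
  have hsplit (n : ι) : lowPass n x + highPass w t (u n) x = u n x :=
    DFunLike.congr_fun (fourierMultiplier_add_eq_self hcutoff (hlow n) (hhigh n)) x
  have hbessel : ∑ n, ‖lowPass n x‖ ^ 2 ≤ A * t := by
    refine (sum_norm_sq_fourierMultiplier_le hu ?_ hlow x).trans ?_
    · simpa only [norm_cubicCutoff] using summable_cubicCutoff_sq hw hw₂ t
    · simpa only [norm_cubicCutoff] using ht
  have htriangle := sqrt_sum_norm_sq_add_le (lowPass · x) (fun n ↦ highPass w t (u n) x)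
  simp only [hsplit] at htriangle
  linarith [sqrt_le_sqrt hbessel]

lemma lintegral_sum_norm_sq_pow_three_le
    (hu : Orthonormal ℂ fun n ↦ (u n).toLp 2 haarAddCircle ℂ) (hw : ∀ k, w k ≠ 0)
    (hw₂ : Summable fun k ↦ (w k ^ 2)⁻¹)
    (hA : ∀ t > 0, ∑' k, cubicCutoff t (w k) ^ 2 ≤ A * t)
    (hE : ∀ n, HasSum (fun k ↦ w k ^ 2 * ‖fourierCoeff (u n) k‖ ^ 2) (E n)) :
    ∫⁻ x, ENNReal.ofReal ((∑ n, ‖u n x‖ ^ 2) ^ 3 / (30 * A ^ 2)) ∂haarAddCircle ≤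
      ∑ n, ENNReal.ofReal (2 * π / (9 * √3) * E n) := by
  have hf (n : ι) := summable_of_summable_sq_mul_norm_sq hw hw₂ (hE n).summable
  have hmeas (n : ι) := measurable_ofReal_mul_enorm_sq_highPass hw (hf n)
  calc ∫⁻ x, ENNReal.ofReal ((∑ n, ‖u n x‖ ^ 2) ^ 3 / (30 * A ^ 2)) ∂haarAddCircle
      ≤ ∫⁻ x, (∫⁻ t in Ioi 0, ENNReal.ofReal (t * ∑ n, ‖highPass w t (u n) x‖ ^ 2))
          ∂haarAddCircle :=
        lintegral_mono fun x ↦ ofReal_pow_three_div_le_lintegral (by positivity)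
          (pos_of_tsum_cubicCutoff_sq_le hw hw₂ hA) fun t ht ↦
            sqrt_sum_norm_sq_sub_le_sqrt_sum_highPass hu hw hw₂ hf (hA t ht) x
    _ = ∫⁻ x, (∫⁻ t in Ioi 0, ∑ n, ENNReal.ofReal t * ‖highPass w t (u n) x‖ₑ ^ 2)
          ∂haarAddCircle := by
        simp_rw [ENNReal.ofReal_mul' (Finset.sum_nonneg fun _ _ ↦ sq_nonneg _),
          ENNReal.ofReal_sum_of_nonneg fun _ _ ↦ sq_nonneg _, ENNReal.ofReal_pow (norm_nonneg _),
          ofReal_norm, Finset.mul_sum]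
    _ = ∑ n, ∫⁻ x, (∫⁻ t in Ioi 0, ENNReal.ofReal t * ‖highPass w t (u n) x‖ₑ ^ 2)
          ∂haarAddCircle := by
        rw [← lintegral_finsetSum _ fun n _ ↦ (hmeas n).lintegral_prod_right']
        exact lintegral_congr fun x ↦
          lintegral_finsetSum _ fun n _ ↦ (hmeas n).comp measurable_prodMk_left
    _ = ∑ n, ENNReal.ofReal (2 * π / (9 * √3) * E n) :=
        Finset.sum_congr rfl fun n _ ↦ lintegral_lintegral_enorm_sq_highPass hw (hf n) (hE n)

theorem integral_sum_norm_sq_pow_three_le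
    (hu : Orthonormal ℂ fun n ↦ (u n).toLp 2 haarAddCircle ℂ) (hw : ∀ k, w k ≠ 0)
    (hw₂ : Summable fun k ↦ (w k ^ 2)⁻¹)
    (hA : ∀ t > 0, ∑' k, cubicCutoff t (w k) ^ 2 ≤ A * t)
    (hE : ∀ n, HasSum (fun k ↦ w k ^ 2 * ‖fourierCoeff (u n) k‖ ^ 2) (E n)) :
    ∫ x, (∑ n, ‖u n x‖ ^ 2) ^ 3 ∂haarAddCircle ≤ 20 * π / (3 * √3) * A ^ 2 * ∑ n, E n := by
  have hA₀ := pos_of_tsum_cubicCutoff_sq_le hw hw₂ hA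
  have hE₀ (n : ι) : 0 ≤ E n := (hE n).nonneg fun _ ↦ by positivity
  have hint : Integrable (fun x ↦ (∑ n, ‖u n x‖ ^ 2) ^ 3 / (30 * A ^ 2)) haarAddCircle :=
    Continuous.integrable_of_hasCompactSupport (by fun_prop) (.of_compactSpace _)
  have hle := lintegral_sum_norm_sq_pow_three_le hu hw hw₂ hA hE
  rw [← ofReal_integral_eq_lintegral_ofReal hint (ae_of_all _ fun _ ↦ by positivity),
    ← ENNReal.ofReal_sum_of_nonneg fun n _ ↦ by have := hE₀ n; positivity,
    ENNReal.ofReal_le_ofReal_iff (Finset.sum_nonneg fun n _ ↦ by have := hE₀ n; positivity),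
    integral_div, div_le_iff₀ (by positivity), ← Finset.mul_sum] at hle
  convert! hle using 1
  ring

theorem intervalIntegral_sum_norm_sq_pow_three_le [DecidableEq ι]
    (hu : ∀ i j, ∫ x in 0..T, u i x * starRingEnd ℂ (u j x) = if i = j then 1 else 0)
    (hw : ∀ k, w k ≠ 0) (hw₂ : Summable fun k ↦ (w k ^ 2)⁻¹)
    (hA : ∀ t > 0, ∑' k, cubicCutoff t (w k) ^ 2 ≤ A * t)
    (hE : ∀ n, HasSum (fun k ↦ w k ^ 2 * ‖fourierCoeff (u n) k‖ ^ 2) (E n)) :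
    ∫ x in 0..T, (∑ n, ‖u n x‖ ^ 2) ^ 3 ≤ 20 * π / (3 * √3) * A ^ 2 / T * ∑ n, E n := by
  have hT₀ := hT.out
  have hsq (z : ℂ) : ‖(√T : ℂ) * z‖ ^ 2 = T * ‖z‖ ^ 2 := by
    rw [norm_mul, Complex.norm_real, norm_of_nonneg (sqrt_nonneg T), mul_pow, sq_sqrt hT₀.le]
  have henergy (n : ι) : HasSum
      (fun k ↦ w k ^ 2 * ‖fourierCoeff ((√T : ℂ) • u n) k‖ ^ 2) (T * E n) := by
    convert! (hE n).mul_left T using 2 with k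
    rw [ContinuousMap.coe_smul, fourierCoeff.const_smul, smul_eq_mul, hsq]
    ring
  have hcircle := integral_sum_norm_sq_pow_three_le (orthonormal_toLp_sqrt_smul hu) hw hw₂ hA
    henergy
  simp_rw [integral_haarAddCircle_eq_smul, ContinuousMap.smul_apply, smul_eq_mul, hsq,
    ← Finset.mul_sum, mul_pow, intervalIntegral.integral_const_mul] at hcircle
  refine le_of_mul_le_mul_left ?_ (sq_pos_of_pos hT₀)
  calc T ^ 2 * ∫ x in 0..T, (∑ n, ‖u n x‖ ^ 2) ^ 3
      = T⁻¹ * (T ^ 3 * ∫ x in 0..T, (∑ n, ‖u n x‖ ^ 2) ^ 3) := by field_simp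
    _ ≤ 20 * π / (3 * √3) * A ^ 2 * (T * ∑ n, E n) := hcircle
    _ = T ^ 2 * (20 * π / (3 * √3) * A ^ 2 / T * ∑ n, E n) := by field_simp

end CutoffEnergy

section GaugeTransform

/-- The phase whose derivative is `a` minus its mean over `[0, L]`; subtracting the mean makes the
phase of an `L`-periodic potential `L`-periodic. -/
noncomputable def gaugePhase (L : ℝ) (a : ℝ → ℝ) (x : ℝ) : ℝ :=
  (∫ t in 0..x, a t) - (∫ t in 0..L, a t) / L * x

/-- The gauge transform of `f`, which turns the vector potential `a` into the constant given by its
mean over `[0, L]`. -/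
noncomputable def gaugeTransform (L : ℝ) (a : ℝ → ℝ) (f : ℝ → ℂ) (x : ℝ) : ℂ :=
  Complex.exp (gaugePhase L a x * Complex.I) * f x

variable {L : ℝ} {a : ℝ → ℝ} {f g : ℝ → ℂ}

lemma hasDerivAt_gaugePhase (L : ℝ) (ha : Continuous a) (x : ℝ) :
    HasDerivAt (gaugePhase L a) (a x - (∫ t in 0..L, a t) / L) x := by
  unfold gaugePhase
  simpa using (ha.integral_hasStrictDerivAt 0 x).hasDerivAt.fun_sub
    ((hasDerivAt_id' x).const_mul ((∫ t in 0..L, a t) / L))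

lemma continuous_gaugePhase (L : ℝ) (ha : Continuous a) : Continuous (gaugePhase L a) :=
  continuous_iff_continuousAt.2 fun x ↦ (hasDerivAt_gaugePhase L ha x).continuousAt

lemma periodic_gaugePhase (hL : L ≠ 0) (ha : Continuous a) (haP : Function.Periodic a L) :
    Function.Periodic (gaugePhase L a) L := fun x ↦ by
  have hperiod : ∫ t in x..x + L, a t = ∫ t in 0..L, a t := by
    simpa using haP.intervalIntegral_add_eq x 0
  rw [gaugePhase, gaugePhase, ← intervalIntegral.integral_add_adjacent_intervals
    (ha.intervalIntegrable 0 x) (ha.intervalIntegrable x (x + L)), hperiod]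
  field_simp
  ring

lemma norm_gaugeTransform (L : ℝ) (a : ℝ → ℝ) (f : ℝ → ℂ) (x : ℝ) :
    ‖gaugeTransform L a f x‖ = ‖f x‖ := by
  rw [gaugeTransform, norm_mul, Complex.norm_exp_ofReal_mul_I, one_mul]

lemma gaugeTransform_mul_conj (L : ℝ) (a : ℝ → ℝ) (f g : ℝ → ℂ) (x : ℝ) :
    gaugeTransform L a f x * starRingEnd ℂ (gaugeTransform L a g x) =
      f x * starRingEnd ℂ (g x) := by
  rw [gaugeTransform, gaugeTransform, map_mul, mul_mul_mul_comm, Complex.mul_conj,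
    Complex.normSq_eq_norm_sq, Complex.norm_exp_ofReal_mul_I]
  simp

lemma continuous_gaugeTransform (L : ℝ) (ha : Continuous a) (hf : Continuous f) :
    Continuous (gaugeTransform L a f) := by
  have := continuous_gaugePhase L ha
  unfold gaugeTransform
  fun_prop

lemma periodic_gaugeTransform (hL : L ≠ 0) (ha : Continuous a) (haP : Function.Periodic a L)
    (hf : Function.Periodic f L) : Function.Periodic (gaugeTransform L a f) L := fun x ↦ by
  rw [gaugeTransform, gaugeTransform, periodic_gaugePhase hL ha haP x, hf x]

lemma hasDerivAt_gaugeTransform (L : ℝ) (ha : Continuous a) {x : ℝ}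
    (hf : DifferentiableAt ℝ f x) :
    HasDerivAt (gaugeTransform L a f)
      (-Complex.I * (gaugeTransform L a (fun y ↦ Complex.I * deriv f y - a y * f y) x +
        ((∫ t in 0..L, a t) / L : ℝ) * gaugeTransform L a f x)) x := by
  have hexp := ((hasDerivAt_gaugePhase L ha x).ofReal_comp.mul_const Complex.I).cexp
  convert! hexp.mul hf.hasDerivAt using 1
  simp only [gaugeTransform]
  push_cast
  linear_combination -Complex.exp (gaugePhase L a x * Complex.I) * deriv f x * Complex.I_sq

lemma exists_continuousMap_addCircle_eq {X : Type*} [TopologicalSpace X] {f : ℝ → X}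
    (hf : Continuous f) (hfP : Function.Periodic f L) :
    ∃ u : C(AddCircle L, X), ∀ x : ℝ, u x = f x :=
  ⟨⟨hfP.lift, continuous_coinduced_dom.2 hf⟩, fun _ ↦ rfl⟩

lemma periodic_deriv {𝕜 F : Type*} [NontriviallyNormedField 𝕜] [NormedAddCommGroup F]
    [NormedSpace 𝕜 F] {f : 𝕜 → F} {c : 𝕜} (hf : Function.Periodic f c) :
    Function.Periodic (deriv f) c := fun x ↦ by
  rw [← deriv_comp_add_const, funext hf]

variable [hL : Fact (0 < L)]

lemma fourierCoeff_of_hasDerivAt {u v : C(AddCircle L, ℂ)}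
    (huv : ∀ x : ℝ, HasDerivAt (fun y : ℝ ↦ u y) (v x) x) (k : ℤ) :
    fourierCoeff v k = 2 * π * Complex.I * k / L * fourierCoeff u k := by
  have hparts := intervalIntegral.integral_mul_deriv_eq_deriv_mul (a := 0) (b := L)
    (fun x _ ↦ hasDerivAt_fourier_neg L k x) (fun x _ ↦ huv x)
    (Continuous.intervalIntegrable (by fun_prop) _ _)
    (Continuous.intervalIntegrable (by fun_prop) _ _)
  rw [AddCircle.coe_period, QuotientAddGroup.mk_zero, sub_self, zero_sub] at hparts
  simp_rw [mul_assoc (-2 * π * Complex.I * k / L : ℂ)] at hparts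
  rw [intervalIntegral.integral_const_mul] at hparts
  simp only [fourierCoeff_eq_intervalIntegral _ k 0, zero_add, smul_eq_mul, hparts,
    Complex.real_smul]
  ring

lemma hasSum_norm_sq_fourierCoeff_gaugeTransform {α : ℝ} (ha : Continuous a)
    (haP : Function.Periodic a L) (hα : α = 1 / (2 * π) * ∫ x in 0..L, a x)
    (hf : ContDiff ℝ 1 f) (hfP : Function.Periodic f L) {u : C(AddCircle L, ℂ)}
    (hu : ∀ x : ℝ, u x = gaugeTransform L a f x) :
    HasSum (fun k : ℤ ↦ ((k : ℝ) + α) ^ 2 * ‖fourierCoeff u k‖ ^ 2)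
      (L / (2 * π) ^ 2 * ∫ x in 0..L, ‖Complex.I * deriv f x - a x * f x‖ ^ 2) := by
  have hL₀ := hL.out
  have hmean : (∫ x in 0..L, a x) / L = 2 * π * α / L := by rw [hα]; field_simp
  obtain ⟨v, hv⟩ := exists_continuousMap_addCircle_eq
    (f := gaugeTransform L a fun x ↦ Complex.I * deriv f x - a x * f x)
    (continuous_gaugeTransform L ha (by
      have := hf.continuous
      have := hf.continuous_deriv le_rfl
      fun_prop))
    (periodic_gaugeTransform hL₀.ne' ha haP fun x ↦ by rw [periodic_deriv hfP x, haP x, hfP x])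
  have hderiv (x : ℝ) : HasDerivAt (fun y : ℝ ↦ u y)
      ((-Complex.I • (v + (2 * π * α / L : ℂ) • u)) x) x := by
    have := hasDerivAt_gaugeTransform L ha (hf.differentiable one_ne_zero x)
    rw [hmean, ← hv, ← hu, ← funext hu] at this
    exact_mod_cast this
  have hcoeff (k : ℤ) : fourierCoeff v k = (-(2 * π / L) * (k + α) : ℝ) * fourierCoeff u k := by
    have := fourierCoeff_of_hasDerivAt hderiv k
    have hint (g : C(AddCircle L, ℂ)) : Integrable g haarAddCircle :=
      g.continuous.integrable_of_hasCompactSupport (.of_compactSpace _)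
    rw [ContinuousMap.coe_smul, fourierCoeff.const_smul, ContinuousMap.coe_add,
      fourierCoeff.add (hint v) (hint _), Pi.add_apply, ContinuousMap.coe_smul,
      fourierCoeff.const_smul, smul_eq_mul, smul_eq_mul] at this
    push_cast
    linear_combination Complex.I * this + (fourierCoeff v k +
      2 * π / L * (k + α) * fourierCoeff u k) * Complex.I_sq
  have hparseval := hasSum_norm_sq_fourierCoeff v
  simp_rw [integral_haarAddCircle_eq_smul, hv, norm_gaugeTransform, hcoeff, norm_mul,
    Complex.norm_real, mul_pow, norm_eq_abs, sq_abs, smul_eq_mul] at hparseval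
  convert! hparseval.mul_left ((L / (2 * π)) ^ 2) using 1
  · ext k
    field_simp
  · field_simp

end GaugeTransform

end LiebThirring

open LiebThirring in
/-- scalar Lieb–Thirring inequality for orthonormal systems, constant `K₂(α)`. -/
theorem lieb_thirring_orthonormal_K2
    (L : ℝ) (hL : 0 < L)
    (a : ℝ → ℝ) (ha : Continuous a) (haP : Function.Periodic a L)
    (α : ℝ) (hα : α = (1 / (2 * Real.pi)) * ∫ x in (0:ℝ)..L, a x)
    (hαZ : ∀ m : ℤ, α ≠ (m : ℝ))
    (N : ℕ) (ψ : Fin N → ℝ → ℂ)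
    (hψ : ∀ n, ContDiff ℝ 1 (ψ n))
    (hψP : ∀ n, Function.Periodic (ψ n) L)
    (horth : ∀ n m, ∫ x in (0:ℝ)..L, ψ n x * (starRingEnd ℂ) (ψ m x) =
      if n = m then 1 else 0) :
    ∫ x in (0:ℝ)..L, (∑ n, ‖ψ n x‖ ^ 2) ^ 3 ≤
      K2 α *
        ∑ n, ∫ x in (0:ℝ)..L, ‖Complex.I * deriv (ψ n) x - (a x : ℂ) * ψ n x‖ ^ 2 := by
  have : Fact (0 < L) := ⟨hL⟩
  choose u hu using fun n ↦ exists_continuousMap_addCircle_eq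
    (continuous_gaugeTransform L ha (hψ n).continuous)
    (periodic_gaugeTransform hL.ne' ha haP (hψP n))
  have horth_u (i j : Fin N) : ∫ x in 0..L, u i x * starRingEnd ℂ (u j x) =
      if i = j then 1 else 0 := by
    simp_rw [hu, gaugeTransform_mul_conj, horth]
  have henergy (n : Fin N) :=
    hasSum_norm_sq_fourierCoeff_gaugeTransform ha haP hα (hψ n) (hψP n) (hu n)
  have hbound := intervalIntegral_sum_norm_sq_pow_three_le horth_u (int_add_ne_zero hαZ)
    (summable_inv_int_add_sq α) (fun t ht ↦ tsum_cubicCutoff_sq_le hαZ ht) henergy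
  simp_rw [hu, norm_gaugeTransform, ← Finset.mul_sum] at hbound
  convert! hbound using 1
  rw [K2]
  field_simp
  ring
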